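/- Suppose F is ε-approximately diminishing returns with respect to f. Let x and o' be k-states with x ⪯ o', let e, u ∈ V be distinct with x e = x u = 0 and o' e = o' u = 0, and let i, i' ∈ {1,…,k} with i ≠ i'. Assume the greedy-choice inequalities Δ_{e,i}F(x) ≥ Δ_{u,i}F(x) and Δ_{e,i}F(x) ≥ Δ_{e,i'}F(x). Then 2·(F(x+(e,i)) − F(x)) ≥ ((1−ε)/(1+ε))·[F((o'+(e,i'))+(u,i)) − F((o'+(e,i))+(u,i'))]. (This is Case 1 of the single-step inequality used in the ε-ADR analysis of k-Greedy-IS, where the greedily selected element e appears in the optimal solution in a different dimension i' and is swapped with the displaced element u.) -/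

import Mathlib

/-!
Write `A = o' + (e,i') + (u,i)` and `B = o' + (e,i) + (u,i')`. Marginal gains of `F` are nonnegative
(`EpsADR.marg_nonneg`, from monotonicity of `f`), so `F B ≥ F o'` and `F A - F B ≤ F A - F o'`.
The latter is the sum of the marginal gains of `(e,i')` at `o'` and of `(u,i)` at `o' + (e,i')`.
Both states extend `x`, so by the approximate diminishing returns of `F` (`EpsADR.marg_le`) each
gain is at most `(1+ε)/(1-ε)` times the corresponding gain at `x`, and the greedy inequalities
bound each gain at `x` by that of `(e,i)`.
-/

/-- The support of a `k`-state: elements assigned a nonzero value. -/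
def supp {V : Type*} [Fintype V] {k : ℕ} [DecidableEq V] (x : V → Fin (k+1)) : Finset V :=
  Finset.univ.filter (fun e => x e ≠ 0)

/-- The `i`-th support of a `k`-state: elements assigned value `i`. -/
def suppi {V : Type*} [Fintype V] {k : ℕ} [DecidableEq V] (x : V → Fin (k+1)) (i : Fin (k+1)) :
    Finset V :=
  Finset.univ.filter (fun e => x e = i)

/-- The partial order on `k`-states: `y` agrees with `x` on the support of `x`. -/
def kle {V : Type*} {k : ℕ} (x y : V → Fin (k+1)) : Prop :=
  ∀ e, x e ≠ 0 → y e = x e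

/-- `kadd x e i` is the `k`-state agreeing with `x` except that `e` is assigned `i`. -/
def kadd {V : Type*} [DecidableEq V] {k : ℕ} (x : V → Fin (k+1)) (e : V) (i : Fin (k+1)) :
    V → Fin (k+1) :=
  Function.update x e i

/-- The marginal gain `Δ_{e,i} g (x) = g(x + (e,i)) - g(x)`. -/
def marg {V : Type*} [DecidableEq V] {k : ℕ} (g : (V → Fin (k+1)) → ℝ) (e : V)
    (i : Fin (k+1)) (x : V → Fin (k+1)) : ℝ :=
  g (kadd x e i) - g x

/-- `f` is monotone and satisfies the diminishing returns property (monotone k-submodular). -/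
def KSubmodular {V : Type*} [Fintype V] [DecidableEq V] {k : ℕ}
    (f : (V → Fin (k+1)) → ℝ) : Prop :=
  (∀ x y : V → Fin (k+1), kle x y → f x ≤ f y) ∧
  (∀ x y : V → Fin (k+1), kle x y → ∀ e, e ∉ supp y → ∀ i : Fin (k+1), i ≠ 0 →
    marg f e i x ≥ marg f e i y)

/-- `F` is ε-approximately k-submodular (ε-AS) with respect to `f`. -/
def EpsAS {V : Type*} [Fintype V] [DecidableEq V] {k : ℕ} (ε : ℝ)
    (F f : (V → Fin (k+1)) → ℝ) : Prop :=
  (∀ x, 0 ≤ f x) ∧ KSubmodular f ∧ f (fun _ => (0 : Fin (k+1))) = 0 ∧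
  (∀ x : V → Fin (k+1), (1 - ε) * f x ≤ F x ∧ F x ≤ (1 + ε) * f x)

/-- `F` is ε-approximately diminishing returns (ε-ADR) with respect to `f`. -/
def EpsADR {V : Type*} [Fintype V] [DecidableEq V] {k : ℕ} (ε : ℝ)
    (F f : (V → Fin (k+1)) → ℝ) : Prop :=
  (∀ x, 0 ≤ f x) ∧ KSubmodular f ∧ f (fun _ => (0 : Fin (k+1))) = 0 ∧
  (∀ x : V → Fin (k+1), ∀ e, e ∉ supp x → ∀ i : Fin (k+1), i ≠ 0 →
    (1 - ε) * marg f e i x ≤ marg F e i x ∧ marg F e i x ≤ (1 + ε) * marg f e i x)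

/-- A greedy TS sequence of length `B` for `G` (run of k-Greedy-TS on `G` with budget `B`). -/
def GreedyTS {V : Type*} [Fintype V] [DecidableEq V] {k : ℕ}
    (G : (V → Fin (k+1)) → ℝ) (B : ℕ) (x : ℕ → V → Fin (k+1))
    (es : ℕ → V) (is : ℕ → Fin (k+1)) : Prop :=
  x 0 = (fun _ => (0 : Fin (k+1))) ∧
  ∀ j, 1 ≤ j → j ≤ B →
    es j ∉ supp (x (j-1)) ∧ is j ≠ 0 ∧
    x j = kadd (x (j-1)) (es j) (is j) ∧
    (∀ e, e ∉ supp (x (j-1)) → ∀ i : Fin (k+1), i ≠ 0 →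
      marg G (es j) (is j) (x (j-1)) ≥ marg G e i (x (j-1)))

/-- A greedy IS sequence for `G` with individual budgets `Bv` (run of k-Greedy-IS on `G`). -/
def GreedyIS {V : Type*} [Fintype V] [DecidableEq V] {k : ℕ}
    (G : (V → Fin (k+1)) → ℝ) (Bv : Fin (k+1) → ℕ) (B : ℕ) (x : ℕ → V → Fin (k+1))
    (es : ℕ → V) (is : ℕ → Fin (k+1)) : Prop :=
  x 0 = (fun _ => (0 : Fin (k+1))) ∧
  ∀ j, 1 ≤ j → j ≤ B →
    es j ∉ supp (x (j-1)) ∧ is j ≠ 0 ∧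
    (suppi (x (j-1)) (is j)).card < Bv (is j) ∧
    x j = kadd (x (j-1)) (es j) (is j) ∧
    (∀ e, e ∉ supp (x (j-1)) → ∀ i : Fin (k+1), i ≠ 0 →
      (suppi (x (j-1)) i).card < Bv i →
      marg G (es j) (is j) (x (j-1)) ≥ marg G e i (x (j-1)))

lemma not_mem_supp {V : Type*} [Fintype V] [DecidableEq V] {k : ℕ} {x : V → Fin (k+1)} {e : V}
    (h : x e = 0) : e ∉ supp x := by
  simp [supp, h]

lemma kle_kadd {V : Type*} [DecidableEq V] {k : ℕ} {x y : V → Fin (k+1)} (h : kle x y) {e : V}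
    (hx : x e = 0) (i : Fin (k+1)) : kle x (kadd y e i) := by
  intro v hv
  have hve : v ≠ e := fun h' => hv (h' ▸ hx)
  simpa [kadd, Function.update_of_ne hve] using h v hv

lemma kadd_of_ne {V : Type*} [DecidableEq V] {k : ℕ} {x : V → Fin (k+1)} {e u : V} (h : e ≠ u)
    (i : Fin (k+1)) : kadd x e i u = x u :=
  Function.update_of_ne h.symm _ _

lemma EpsADR.marg_nonneg {V : Type*} [Fintype V] [DecidableEq V] {k : ℕ} {ε : ℝ} (hε1 : ε < 1)
    {F f : (V → Fin (k+1)) → ℝ} (hADR : EpsADR ε F f) {x : V → Fin (k+1)} {e : V}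
    (hx : x e = 0) {i : Fin (k+1)} (hi : i ≠ 0) : 0 ≤ marg F e i x := by
  obtain ⟨-, ⟨hmono, -⟩, -, hF⟩ := hADR
  have hf : 0 ≤ marg f e i x := sub_nonneg.2 (hmono _ _ (kle_kadd (fun _ _ => rfl) hx i))
  exact (mul_nonneg (by linarith) hf).trans (hF x e (not_mem_supp hx) i hi).1

/-- Diminishing returns of `F`, up to the factor `(1+ε)/(1-ε)`: pass to `f` at `y`, use exact
diminishing returns of `f`, and return to `F` at `x`. -/
lemma EpsADR.marg_le {V : Type*} [Fintype V] [DecidableEq V] {k : ℕ} {ε : ℝ} (hε0 : 0 < ε)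
    (hε1 : ε < 1) {F f : (V → Fin (k+1)) → ℝ} (hADR : EpsADR ε F f) {x y : V → Fin (k+1)}
    (hxy : kle x y) {e : V} (hx : x e = 0) (hy : y e = 0) {i : Fin (k+1)} (hi : i ≠ 0) :
    (1 - ε) * marg F e i y ≤ (1 + ε) * marg F e i x := by
  obtain ⟨-, ⟨-, hdr⟩, -, hF⟩ := hADR
  have hf : marg f e i y ≤ marg f e i x := hdr x y hxy e (not_mem_supp hy) i hi
  calc (1 - ε) * marg F e i y
      ≤ (1 - ε) * ((1 + ε) * marg f e i y) :=
        mul_le_mul_of_nonneg_left (hF y e (not_mem_supp hy) i hi).2 (by linarith)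
    _ ≤ (1 - ε) * ((1 + ε) * marg f e i x) :=
        mul_le_mul_of_nonneg_left (mul_le_mul_of_nonneg_left hf (by linarith)) (by linarith)
    _ = (1 + ε) * ((1 - ε) * marg f e i x) := by ring
    _ ≤ (1 + ε) * marg F e i x :=
        mul_le_mul_of_nonneg_left (hF x e (not_mem_supp hx) i hi).1 (by linarith)

/-- Case 1 single-step inequality in the ε-ADR analysis of k-Greedy-IS. -/
theorem stmt12 {V : Type*} [Fintype V] [DecidableEq V] {k : ℕ} (hk : 1 ≤ k)
    (ε : ℝ) (hε0 : 0 < ε) (hε1 : ε < 1)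
    (F f : (V → Fin (k+1)) → ℝ)
    (hADR : EpsADR ε F f)
    (x o' : V → Fin (k+1)) (hxo : kle x o')
    (e u : V) (heu : e ≠ u)
    (hxe : x e = 0) (hxu : x u = 0) (hoe : o' e = 0) (hou : o' u = 0)
    (i i' : Fin (k+1)) (hi : i ≠ 0) (hi' : i' ≠ 0) (hii : i ≠ i')
    (h1 : marg F e i x ≥ marg F u i x) (h2 : marg F e i x ≥ marg F e i' x) :
    2 * (F (kadd x e i) - F x) ≥
      ((1 - ε) / (1 + ε)) *
        (F (kadd (kadd o' e i') u i) - F (kadd (kadd o' e i) u i')) := by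
  have hA1 := hADR.marg_le hε0 hε1 hxo hxe hoe hi'
  have hA2 := hADR.marg_le hε0 hε1 (kle_kadd hxo hxe i') hxu ((kadd_of_ne heu i').trans hou) hi
  have hB1 := hADR.marg_nonneg hε1 hoe hi
  have hB2 := hADR.marg_nonneg hε1 ((kadd_of_ne heu i).trans hou) hi'
  have hG : (1 + ε) * (marg F e i' x + marg F u i x) ≤ (1 + ε) * (2 * marg F e i x) :=
    mul_le_mul_of_nonneg_left (by linarith) (by linarith)
  have hB := mul_nonneg (sub_nonneg.2 hε1.le) (add_nonneg hB1 hB2)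
  rw [ge_iff_le, div_mul_eq_mul_div, div_le_iff₀ (by linarith)]
  unfold marg at *
  linarith
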